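/- For every forest F, the supremum ρ(F) of τ_F(G)/ν_F(G) over all graphs G with ν_F(G) > 0 satisfies ρ(F) ≥ |V(F)|. -/

import Mathlib

open SimpleGraph Set

/-- `H` is a minor of `G`: there is a model of `H` in `G` given by pairwise disjoint
branch sets, each inducing a connected subgraph, with edges of `H` realized by edges of `G`. -/
def HasMinor {V W : Type*} (G : SimpleGraph V) (H : SimpleGraph W) : Prop :=
  ∃ f : W → Set V,
    (∀ w, ((G.induce (f w)).Connected)) ∧
    (Pairwise fun w w' => Disjoint (f w) (f w')) ∧
    ∀ ⦃w w'⦄, H.Adj w w' → ∃ a ∈ f w, ∃ b ∈ f w', G.Adj a b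

/-- A path decomposition of the part of `G` inside the vertex set `A`, with bags `B 0, …, B (p-1)`. -/
def IsPathDecompOn {V : Type*} (G : SimpleGraph V) (A : Set V) (p : ℕ) (B : Fin p → Set V) : Prop :=
  (∀ i, B i ⊆ A) ∧
  (∀ v ∈ A, ∃ i, v ∈ B i) ∧
  (∀ ⦃u v⦄, G.Adj u v → u ∈ A → v ∈ A → ∃ i, u ∈ B i ∧ v ∈ B i) ∧
  (∀ v (i j l : Fin p), i ≤ j → j ≤ l → v ∈ B i → v ∈ B l → v ∈ B j)

/-- The pathwidth of `G`: the least `t` such that `G` has a path decomposition of width `t`. -/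
noncomputable def pathwidth {V : Type*} (G : SimpleGraph V) : ℕ :=
  sInf {t | ∃ p, ∃ B : Fin p → Set V, IsPathDecompOn G Set.univ p B ∧ ∀ i, (B i).ncard ≤ t + 1}

/-- A packing of `k` vertex-disjoint subgraphs of `G`, each containing `H` as a minor. -/
def IsHPacking {V W : Type*} (G : SimpleGraph V) (H : SimpleGraph W) (k : ℕ)
    (S : Fin k → Set V) : Prop :=
  (Pairwise fun a b => Disjoint (S a) (S b)) ∧ ∀ a, HasMinor (G.induce (S a)) H

/-- `ν_H(G)`: the maximum size of an `H`-packing in `G`. -/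
noncomputable def nuT {V W : Type*} (G : SimpleGraph V) (H : SimpleGraph W) : ℕ :=
  sSup {k | ∃ S : Fin k → Set V, IsHPacking G H k S}

/-- `τ_H(G)`: the minimum size of a vertex set `X` such that `G - X` has no `H`-minor. -/
noncomputable def tauT {V W : Type*} (G : SimpleGraph V) (H : SimpleGraph W) : ℕ :=
  sInf {n | ∃ X : Set V, X.ncard = n ∧ ¬ HasMinor (G.induce Xᶜ) H}

/-- A packing of `k` vertex-disjoint subgraphs of `G`, each containing some member of the
family `F` as a minor. -/
def IsFPacking {V ι : Type*} {W : ι → Type*} (G : SimpleGraph V) (F : ∀ i, SimpleGraph (W i))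
    (k : ℕ) (S : Fin k → Set V) : Prop :=
  (Pairwise fun a b => Disjoint (S a) (S b)) ∧ ∀ a, ∃ i, HasMinor (G.induce (S a)) (F i)

/-- `ν_F(G)`: the maximum size of an `F`-packing in `G`. -/
noncomputable def nuF {V ι : Type*} {W : ι → Type*} (G : SimpleGraph V)
    (F : ∀ i, SimpleGraph (W i)) : ℕ :=
  sSup {k | ∃ S : Fin k → Set V, IsFPacking G F k S}

/-- `τ_F(G)`: the minimum size of a vertex set `X` such that `G - X` has no minor in `F`. -/
noncomputable def tauF {V ι : Type*} {W : ι → Type*} (G : SimpleGraph V)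
    (F : ∀ i, SimpleGraph (W i)) : ℕ :=
  sInf {n | ∃ X : Set V, X.ncard = n ∧ ∀ i, ¬ HasMinor (G.induce Xᶜ) (F i)}

/-!
In `K_n` the packing number is at most `n / t` and the covering number is more than `n - t`, where
`t = |V(F)|`, so their ratio is at least `t - t² / n`, which tends to `t`. Since `sSup` of an
unbounded set of reals is `0`, the ratios must also be shown to be bounded, that is, forests must
be shown to have the Erdős–Pósa property with a linear bound. An induced subgraph that cannot be
swept with boundaries of size at most `t` has a part, sweepable within it and with boundary at most
`t`, that contains `F` as a minor. Splitting off such parts greedily costs `t` vertices per packed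
copy of `F` and leaves a sweepable graph. There the components of `F` are connected, so along the
sweep one can either pack `ν + 1` copies of each of them, hence of `F`, or hit every copy of one of
them with few vertices.
-/

section

variable {V W : Type*} {G : SimpleGraph V} {F : SimpleGraph W}

/-- No edge of `G` joins the vertex sets `P` and `Q`; the two sets may overlap. -/
def Anticomplete (G : SimpleGraph V) (P Q : Set V) : Prop :=
  ∀ a ∈ P, ∀ b ∈ Q, ¬G.Adj a b

theorem Anticomplete.mono {P P' Q Q' : Set V} (h : Anticomplete G P Q) (hP : P' ⊆ P)
    (hQ : Q' ⊆ Q) : Anticomplete G P' Q' :=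
  fun a ha b hb => h a (hP ha) b (hQ hb)

theorem Anticomplete.subset_left_of_preconnected {P Q C : Set V} (h : Anticomplete G P Q)
    (hC : (G.induce C).Preconnected) (hCPQ : C ⊆ P ∪ Q) (hCP : (C ∩ P).Nonempty) : C ⊆ P := by
  obtain ⟨x, hxC, hxP⟩ := hCP
  intro y hyC
  by_contra hyP
  obtain ⟨p⟩ := hC ⟨x, hxC⟩ ⟨y, hyC⟩
  obtain ⟨d, -, hfst, hsnd⟩ := p.exists_boundary_dart {v | (v : V) ∈ P} hxP hyP
  exact h _ hfst _ ((hCPQ d.snd.2).resolve_left hsnd) d.adj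

theorem induce_singleton_connected (G : SimpleGraph V) (x : V) :
    (G.induce ({x} : Set V)).Connected :=
  have : Nonempty ({x} : Set V) := ⟨⟨x, rfl⟩⟩
  Connected.of_subsingleton

theorem induce_insert_connected {S : Set V} (hS : (G.induce S).Preconnected) {x y : V}
    (hy : y ∈ S) (hxy : G.Adj x y) : (G.induce (insert x S)).Connected :=
  connected_induce_union (induce_singleton_connected G x).preconnected hS rfl hy hxy

theorem pairwiseDisjoint_insert_update {ι α : Type*} [DecidableEq ι] {s : Set ι} {f : ι → Set α}
    {i : ι} {a : Set α} (hs : s.PairwiseDisjoint f) (hi : i ∉ s)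
    (ha : ∀ j ∈ s, Disjoint a (f j)) :
    (insert i s).PairwiseDisjoint (Function.update f i a) := by
  have hold : ∀ j ∈ s, Function.update f i a j = f j := fun j hj =>
    Function.update_of_ne (ne_of_mem_of_not_mem hj hi) ..
  refine PairwiseDisjoint.insert (fun j hj k hk hjk => ?_) fun j hj _ => ?_
  · rw [Function.onFun, hold j hj, hold k hk]
    exact hs hj hk hjk
  · rw [Function.update_self, hold j hj]
    exact ha j hj

/-! ### Minor models -/

/-- `f` is a model in `G` of the subgraph of `F` induced by `D`, all of whose branch sets lie
in `S`. The values of `f` outside `D` are unconstrained. -/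
structure IsModelIn (G : SimpleGraph V) (S : Set V) (F : SimpleGraph W) (D : Set W)
    (f : W → Set V) : Prop where
  subset : ∀ w ∈ D, f w ⊆ S
  connected : ∀ w ∈ D, (G.induce (f w)).Connected
  disjoint : D.PairwiseDisjoint f
  adj : ∀ u ∈ D, ∀ w ∈ D, F.Adj u w → ∃ a ∈ f u, ∃ b ∈ f w, G.Adj a b

/-- The subgraph of `G` induced by `S` has the subgraph of `F` induced by `D` as a minor.
Phrased with sets of vertices of `G` and `F`, so that `S` and `D` can vary without a change of
vertex types. -/
def HasMinorOn (G : SimpleGraph V) (S : Set V) (F : SimpleGraph W) (D : Set W) : Prop :=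
  ∃ f, IsModelIn G S F D f

/-- `HasMinorOn` with the additional requirement that every branch set meets the root set `R`. -/
def HasRootedMinorOn (G : SimpleGraph V) (S : Set V) (F : SimpleGraph W) (D : Set W)
    (R : Set V) : Prop :=
  ∃ f, IsModelIn G S F D f ∧ ∀ w ∈ D, (f w ∩ R).Nonempty

theorem HasRootedMinorOn.hasMinorOn {S R : Set V} {D : Set W}
    (h : HasRootedMinorOn G S F D R) : HasMinorOn G S F D :=
  let ⟨f, hf, _⟩ := h
  ⟨f, hf⟩

theorem HasMinorOn.mono {S T : Set V} {D E : Set W} (h : HasMinorOn G S F D) (hST : S ⊆ T)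
    (hED : E ⊆ D) : HasMinorOn G T F E :=
  let ⟨f, hf⟩ := h
  ⟨f,
    { subset := fun w hw => (hf.subset w (hED hw)).trans hST
      connected := fun w hw => hf.connected w (hED hw)
      disjoint := hf.disjoint.subset hED
      adj := fun u hu w hw => hf.adj u (hED hu) w (hED hw) }⟩

theorem not_hasMinorOn_empty {D : Set W} (hD : D.Nonempty) : ¬HasMinorOn G ∅ F D := by
  rintro ⟨f, hf⟩
  obtain ⟨w, hw⟩ := hD
  obtain ⟨x⟩ := (hf.connected w hw).nonempty
  exact hf.subset w hw x.2

protected theorem IsModelIn.insert [DecidableEq W] {S : Set V} {D : Set W} {f : W → Set V}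
    (hf : IsModelIn G S F D f) {w : W} {y : V} (hw : w ∉ D) (hy : y ∉ S)
    (hadj : ∀ u ∈ D, F.Adj w u → ∃ a ∈ f u, G.Adj y a) :
    IsModelIn G (insert y S) F (insert w D) (Function.update f w {y}) := by
  have hself : Function.update f w {y} w = {y} := Function.update_self ..
  have hold : ∀ u ∈ D, Function.update f w {y} u = f u := fun u hu =>
    Function.update_of_ne (ne_of_mem_of_not_mem hu hw) ..
  constructor
  · refine forall_mem_insert.2 ⟨by simp, fun u hu => ?_⟩
    rw [hold u hu]
    exact (hf.subset u hu).trans (subset_insert ..)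
  · refine forall_mem_insert.2 ⟨?_, fun u hu => ?_⟩
    · rw [hself]
      exact induce_singleton_connected G y
    · rw [hold u hu]
      exact hf.connected u hu
  · exact pairwiseDisjoint_insert_update hf.disjoint hw fun u hu =>
      disjoint_singleton_left.2 fun hyu => hy (hf.subset u hu hyu)
  · rintro u (rfl | hu) v (rfl | hv) huv
    · exact (huv.ne rfl).elim
    · rw [hself, hold v hv]
      exact ⟨y, rfl, hadj v hv huv⟩
    · rw [hself, hold u hu]
      obtain ⟨a, ha, hya⟩ := hadj u hu huv.symm
      exact ⟨a, ha, y, rfl, hya.symm⟩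
    · rw [hold u hu, hold v hv]
      exact hf.adj u hu v hv huv

theorem HasMinorOn.or_of_anticomplete {P Q : Set V} {D : Set W}
    (hD : (F.induce D).Connected) (h : HasMinorOn G (P ∪ Q) F D) (hPQ : Anticomplete G P Q) :
    HasMinorOn G P F D ∨ HasMinorOn G Q F D := by
  obtain ⟨f, hf⟩ := h
  have hleft : ∀ w ∈ D, (f w ∩ P).Nonempty → f w ⊆ P := fun w hw =>
    hPQ.subset_left_of_preconnected (hf.connected w hw).preconnected (hf.subset w hw)
  have hright : ∀ w ∈ D, ¬f w ⊆ P → f w ⊆ Q := by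
    intro w hw hwP x hx
    exact (hf.subset w hw hx).resolve_left fun hxP => hwP (hleft w hw ⟨x, hx, hxP⟩)
  have hanti : Anticomplete F {w ∈ D | f w ⊆ P} {w ∈ D | ¬f w ⊆ P} := by
    rintro u ⟨hu, huP⟩ w ⟨hw, hwP⟩ huw
    obtain ⟨a, ha, b, hb, hab⟩ := hf.adj u hu w hw huw
    exact hPQ a (huP ha) b (hright w hw hwP hb) hab
  by_cases hP : (D ∩ {w ∈ D | f w ⊆ P}).Nonempty
  · have hDP : D ⊆ {w ∈ D | f w ⊆ P} :=
      hanti.subset_left_of_preconnected hD.preconnected (by grind) hP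
    exact .inl ⟨f, { hf with subset := fun w hw => (hDP hw).2 }⟩
  · exact .inr ⟨f, { hf with subset := fun w hw => hright w hw fun hwP => hP ⟨w, hw, hw, hwP⟩ }⟩

theorem hasMinorOn_iUnion_of_connectedComponent {T : F.ConnectedComponent → Set V}
    (h : ∀ c, HasMinorOn G (T c) F c.supp) (hT : Pairwise fun c d => Disjoint (T c) (T d)) :
    HasMinorOn G (⋃ c, T c) F univ := by
  choose f hf using h
  have hmem (w : W) : w ∈ (F.connectedComponentMk w).supp := rfl
  refine ⟨fun w => f (F.connectedComponentMk w) w, fun w _ => ?_, fun w _ => ?_, ?_, ?_⟩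
  · exact ((hf _).subset w (hmem w)).trans (subset_iUnion T _)
  · exact (hf _).connected w (hmem w)
  · intro u _ w _ huw
    by_cases hc : F.connectedComponentMk u = F.connectedComponentMk w
    · simp only [Function.onFun, hc]
      exact (hf _).disjoint hc (hmem w) huw
    · exact (hT hc).mono ((hf _).subset u (hmem u)) ((hf _).subset w (hmem w))
  · intro u _ w _ huw
    have hc : F.connectedComponentMk u = F.connectedComponentMk w :=
      ConnectedComponent.sound huw.reachable
    simp only [hc]
    exact (hf _).adj u hc w (hmem w) huw

theorem induce_induce_connected_iff {S : Set V} (T : Set S) :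
    ((G.induce S).induce T).Connected ↔ (G.induce (Subtype.val '' T)).Connected :=
  Iso.connected_iff
    { toEquiv := Equiv.Set.image Subtype.val T Subtype.val_injective
      map_rel_iff' := Iff.rfl }

theorem hasMinor_induce_iff {S : Set V} :
    HasMinor (G.induce S) F ↔ HasMinorOn G S F univ := by
  constructor
  · rintro ⟨f, hconn, hdisj, hadj⟩
    refine ⟨fun w => Subtype.val '' f w, fun w _ => ?_, fun w _ => ?_, fun u _ w _ huw => ?_,
      fun u _ w _ huw => ?_⟩
    · exact Subtype.coe_image_subset S (f w)
    · exact (induce_induce_connected_iff _).1 (hconn w)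
    · exact (disjoint_image_iff Subtype.val_injective).2 (hdisj huw)
    · obtain ⟨a, ha, b, hb, hab⟩ := hadj huw
      exact ⟨a, ⟨a, ha, rfl⟩, b, ⟨b, hb, rfl⟩, hab⟩
  · rintro ⟨f, hf⟩
    refine ⟨fun w => Subtype.val ⁻¹' f w, fun w => ?_, fun u w huw => ?_, fun u w huw => ?_⟩
    · rw [induce_induce_connected_iff, Subtype.image_preimage_coe,
        inter_eq_self_of_subset_right (hf.subset w trivial)]
      exact hf.connected w trivial
    · exact (hf.disjoint trivial trivial huw).preimage _
    · obtain ⟨a, ha, b, hb, hab⟩ := hf.adj u trivial w trivial huw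
      exact ⟨⟨a, hf.subset u trivial ha⟩, ha, ⟨b, hf.subset w trivial hb⟩, hb, hab⟩

/-! ### Boundaries -/

/-- The vertices of `A` with a neighbour in `U \ A`; the ambient set `U` stands for the
subgraph of `G` it induces. -/
def innerBoundary (G : SimpleGraph V) (U A : Set V) : Set V :=
  {a ∈ A | ∃ b ∈ U \ A, G.Adj a b}

theorem innerBoundary_subset (G : SimpleGraph V) (U A : Set V) : innerBoundary G U A ⊆ A :=
  sep_subset ..

theorem innerBoundary_empty (G : SimpleGraph V) (U : Set V) : innerBoundary G U ∅ = ∅ :=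
  sep_empty ..

theorem innerBoundary_insert_subset (G : SimpleGraph V) (U A : Set V) (y : V) :
    innerBoundary G U (insert y A) ⊆ insert y (innerBoundary G U A) := by
  rintro x ⟨rfl | hx, b, ⟨hbU, hbA⟩, hxb⟩
  · exact .inl rfl
  · exact .inr ⟨hx, b, ⟨hbU, fun h => hbA (.inr h)⟩, hxb⟩

theorem innerBoundary_sdiff_subset (G : SimpleGraph V) (U A Y : Set V) :
    innerBoundary G (U \ Y) (A \ Y) ⊆ innerBoundary G U A := by
  rintro x ⟨hx, b, ⟨hbU, hbA⟩, hxb⟩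
  exact ⟨hx.1, b, ⟨hbU.1, fun h => hbA ⟨h, hbU.2⟩⟩, hxb⟩

theorem innerBoundary_sdiff_of_subset {U A Y : Set V} (hYA : Y ⊆ A) :
    innerBoundary G (U \ Y) (A \ Y) = innerBoundary G U A \ Y := by
  refine Subset.antisymm
    (fun x hx => ⟨innerBoundary_sdiff_subset G U A Y hx, hx.1.2⟩) ?_
  rintro x ⟨⟨hx, b, ⟨hbU, hbA⟩, hxb⟩, hxY⟩
  exact ⟨⟨hx, hxY⟩, b, ⟨⟨hbU, fun h => hbA (hYA h)⟩, fun h => hbA h.1⟩, hxb⟩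

theorem anticomplete_sdiff_innerBoundary (G : SimpleGraph V) (U A : Set V) :
    Anticomplete G (A \ innerBoundary G U A) (U \ A) :=
  fun _ ha b hb hab => ha.2 ⟨ha.1, b, hb, hab⟩

theorem ncard_innerBoundary_insert_le (G : SimpleGraph V) (U A : Set V) (y : V) [Finite V] :
    (innerBoundary G U (insert y A)).ncard ≤ (innerBoundary G U A).ncard + 1 :=
  (ncard_le_ncard (innerBoundary_insert_subset G U A y)).trans (ncard_insert_le ..)

theorem innerBoundary_insert_eq_of_ncard_lt [Finite V] {U A : Set V} {y : V}
    (h : (innerBoundary G U A).ncard < (innerBoundary G U (insert y A)).ncard) :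
    innerBoundary G U (insert y A) = insert y (innerBoundary G U A) :=
  eq_of_subset_of_ncard_le (innerBoundary_insert_subset G U A y)
    ((ncard_insert_le ..).trans h)

theorem ncard_innerBoundary_inter_add_ncard_union_le [Finite V] (G : SimpleGraph V)
    (U A C : Set V) :
    (innerBoundary G U (A ∩ C)).ncard + (innerBoundary G U (A ∪ C)).ncard ≤
      (innerBoundary G U A).ncard + (innerBoundary G U C).ncard := by
  rw [← ncard_union_add_ncard_inter (innerBoundary G U (A ∩ C)),
    ← ncard_union_add_ncard_inter (innerBoundary G U A)]
  refine Nat.add_le_add (ncard_le_ncard ?_) (ncard_le_ncard ?_)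
  · rintro x (⟨⟨hxA, hxC⟩, b, ⟨hbU, hb⟩, hxb⟩ | ⟨hx, b, ⟨hbU, hb⟩, hxb⟩)
    · by_cases hbA : b ∈ A
      · exact .inr ⟨hxC, b, ⟨hbU, fun hbC => hb ⟨hbA, hbC⟩⟩, hxb⟩
      · exact .inl ⟨hxA, b, ⟨hbU, hbA⟩, hxb⟩
    · exact hx.imp (fun hxA => ⟨hxA, b, ⟨hbU, fun h => hb (.inl h)⟩, hxb⟩)
        fun hxC => ⟨hxC, b, ⟨hbU, fun h => hb (.inr h)⟩, hxb⟩
  · rintro x ⟨⟨⟨hxA, hxC⟩, -⟩, -, b, ⟨hbU, hb⟩, hxb⟩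
    exact ⟨⟨hxA, b, ⟨hbU, fun h => hb (.inl h)⟩, hxb⟩,
      hxC, b, ⟨hbU, fun h => hb (.inr h)⟩, hxb⟩

/-! ### Linkages -/

/-- Pairwise disjoint connected sets `P x ⊆ A`, one for each `x ∈ X`, each of which meets `B`
exactly in `x` and reaches `Y`. They play the role of disjoint `X`–`Y` paths avoiding `B`. -/
structure IsLinkage (G : SimpleGraph V) (B X A Y : Set V) (P : V → Set V) : Prop where
  subset : ∀ x ∈ X, P x ⊆ A
  connected : ∀ x ∈ X, (G.induce (P x)).Connected
  inter_eq : ∀ x ∈ X, P x ∩ B = {x}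
  meets : ∀ x ∈ X, ∃ y ∈ P x, y ∈ Y
  disjoint : X.PairwiseDisjoint P

theorem IsLinkage.self_mem {B X A Y : Set V} {P : V → Set V} (h : IsLinkage G B X A Y P) {x : V}
    (hx : x ∈ X) : x ∈ P x :=
  (singleton_subset_iff.1 (h.inter_eq x hx).superset).1

theorem IsLinkage.eq_of_mem {B X A Y : Set V} {P : V → Set V} (h : IsLinkage G B X A Y P)
    {x z : V} (hx : x ∈ X) (hz : z ∈ P x) (hzB : z ∈ B) : z = x :=
  (h.inter_eq x hx).subset ⟨hz, hzB⟩

theorem IsLinkage.exists_trans {B C A X Y Z : Set V} {P Q : V → Set V} (hBC : B ⊆ C) (hCA : C ⊆ A)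
    (hP : IsLinkage G B X C Y P) (hQ : IsLinkage G C Y A Z Q) : ∃ R, IsLinkage G B X A Z R := by
  choose! r hrP hrY using hP.meets
  have hQP : ∀ x ∈ X, ∀ z ∈ Q (r x), z ∈ C → z ∈ P x := fun x hx z hz hzC =>
    hQ.eq_of_mem (hrY x hx) hz hzC ▸ hrP x hx
  have hr : ∀ x ∈ X, ∀ x' ∈ X, x ≠ x' → r x ≠ r x' := fun x hx x' hx' hne heq =>
    disjoint_left.1 (hP.disjoint hx hx' hne) (hrP x hx) (heq ▸ hrP x' hx')
  refine ⟨fun x => P x ∪ Q (r x), fun x hx => ?_, fun x hx => ?_, fun x hx => ?_, fun x hx => ?_,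
    fun x hx x' hx' hne => ?_⟩
  · exact union_subset ((hP.subset x hx).trans hCA) (hQ.subset _ (hrY x hx))
  · exact induce_union_connected (hP.connected x hx).preconnected
      (hQ.connected _ (hrY x hx)).preconnected ⟨r x, hrP x hx, hQ.self_mem (hrY x hx)⟩
  · rw [← hP.inter_eq x hx, union_inter_distrib_right, union_eq_left]
    exact fun z ⟨hz, hzB⟩ => ⟨hQP x hx z hz (hBC hzB), hzB⟩
  · obtain ⟨z, hz, hzZ⟩ := hQ.meets _ (hrY x hx)
    exact ⟨z, .inr hz, hzZ⟩
  · have hPP := disjoint_left.1 (hP.disjoint hx hx' hne)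
    refine disjoint_left.2 ?_
    rintro z (hz | hz) (hz' | hz')
    · exact hPP hz hz'
    · exact hPP hz (hQP x' hx' z hz' (hP.subset x hx hz))
    · exact hPP (hQP x hx z hz (hP.subset x' hx' hz')) hz'
    · exact disjoint_left.1 (hQ.disjoint (hrY x hx) (hrY x' hx') (hr x hx x' hx' hne)) hz hz'

theorem IsLinkage.mono {B B' X X' A Y Y' : Set V} {P : V → Set V} (h : IsLinkage G B X A Y P)
    (hX : X' ⊆ X) (hB : B' ⊆ B) (hXB : X' ⊆ B') (hY : Y ⊆ Y') : IsLinkage G B' X' A Y' P where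
  subset x hx := h.subset x (hX hx)
  connected x hx := h.connected x (hX hx)
  inter_eq _ hx := Subset.antisymm (fun _ hz => h.eq_of_mem (hX hx) hz.1 (hB hz.2))
    (singleton_subset_iff.2 ⟨h.self_mem (hX hx), hXB hx⟩)
  meets _ hx := (h.meets _ (hX hx)).imp fun _ hy => ⟨hy.1, hY hy.2⟩
  disjoint := h.disjoint.subset hX

theorem IsLinkage.of_sdiff_singleton {B X A Y : Set V} {P : V → Set V} {x : V}
    (h : IsLinkage G (B \ {x}) X (A \ {x}) Y P) : IsLinkage G B X A Y P where
  subset z hz := (h.subset z hz).trans sdiff_subset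
  connected := h.connected
  inter_eq z hz := by
    rw [← h.inter_eq z hz]
    exact Subset.antisymm (fun a ha => ⟨ha.1, ha.2, (h.subset z hz ha.1).2⟩)
      (inter_subset_inter_right _ sdiff_subset)
  meets := h.meets
  disjoint := h.disjoint

protected theorem IsLinkage.insert [DecidableEq V] {B X A Y Q : Set V} {P : V → Set V} {x y : V}
    (h : IsLinkage G B X A Y P) (hx : x ∉ X) (hQA : Q ⊆ A) (hQ : (G.induce Q).Connected)
    (hQB : Q ∩ B = {x}) (hy : y ∈ Q) (hyY : y ∈ Y) (hQP : ∀ z ∈ X, Disjoint Q (P z)) :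
    IsLinkage G B (insert x X) A Y (Function.update P x Q) := by
  have hself : Function.update P x Q x = Q := Function.update_self ..
  have hold : ∀ z ∈ X, Function.update P x Q z = P z := fun z hz =>
    Function.update_of_ne (ne_of_mem_of_not_mem hz hx) ..
  refine ⟨forall_mem_insert.2 ⟨by rwa [hself], fun z hz => ?_⟩,
    forall_mem_insert.2 ⟨by rwa [hself], fun z hz => ?_⟩,
    forall_mem_insert.2 ⟨by rwa [hself], fun z hz => ?_⟩,
    forall_mem_insert.2 ⟨⟨y, by rwa [hself], hyY⟩, fun z hz => ?_⟩,
    pairwiseDisjoint_insert_update h.disjoint hx hQP⟩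
  · rw [hold z hz]
    exact h.subset z hz
  · rw [hold z hz]
    exact h.connected z hz
  · rw [hold z hz]
    exact h.inter_eq z hz
  · rw [hold z hz]
    exact h.meets z hz

theorem IsLinkage.insert_singleton [DecidableEq V] {B X A Y : Set V} {P : V → Set V} {x : V}
    (h : IsLinkage G (B \ {x}) X (A \ {x}) Y P) (hxX : x ∉ X) (hxB : x ∈ B) (hxA : x ∈ A) :
    IsLinkage G B (insert x X) A (insert x Y) (Function.update P x {x}) := by
  have h' : IsLinkage G B X A Y P := h.of_sdiff_singleton
  have hXB : X ⊆ B := fun z hz => ((h'.inter_eq z hz).superset rfl).2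
  refine (h'.mono Subset.rfl Subset.rfl hXB (subset_insert x Y)).insert hxX
    (singleton_subset_iff.2 hxA) (induce_singleton_connected G x)
    (inter_eq_left.2 (singleton_subset_iff.2 hxB)) rfl (mem_insert x Y) fun z hz => ?_
  exact disjoint_singleton_left.2 fun hx => (h.subset z hz hx).2 rfl

theorem IsLinkage.cons [DecidableEq V] {B X A Y : Set V} {P : V → Set V} {x y : V}
    (h : IsLinkage G (insert y B \ {x}) (insert y X) (A \ {x}) Y P) (hxy : G.Adj x y)
    (hxX : x ∉ X) (hXB : X ⊆ B) (hxB : x ∈ B) (hyB : y ∉ B) (hxA : x ∈ A) :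
    IsLinkage G B (insert x X) A Y (Function.update P x (insert x (P y))) := by
  have h' : IsLinkage G (insert y B) (insert y X) A Y P := h.of_sdiff_singleton
  have hy : y ∈ insert y X := mem_insert y X
  have hxP : ∀ z ∈ insert y X, x ∉ P z := fun z hz hx => (h.subset z hz hx).2 rfl
  obtain ⟨a, ha, haY⟩ := h.meets y hy
  refine (h'.mono (subset_insert y X) (subset_insert y B) hXB Subset.rfl).insert hxX
    (insert_subset hxA (h'.subset y hy))
    (induce_insert_connected (h.connected y hy).preconnected (h.self_mem hy) hxy)
    ?_ (mem_insert_of_mem x ha) haY fun z hz => ?_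
  · refine Subset.antisymm ?_ (singleton_subset_iff.2 ⟨mem_insert x _, hxB⟩)
    rintro a ⟨rfl | ha, haB⟩
    · rfl
    · exact (hyB (h'.eq_of_mem hy ha (.inr haB) ▸ haB)).elim
  · exact disjoint_insert_left.2 ⟨hxP z (.inr hz),
      h.disjoint hy (.inr hz) (ne_of_mem_of_not_mem (hXB hz) hyB).symm⟩

/-- No set between `B` and `A` has a smaller inner boundary than `B`, so no separator between
`B` and the complement of `A` is smaller than the inner boundary of `B`. -/
structure IsBottleneck (G : SimpleGraph V) (U B A : Set V) : Prop where
  subset : B ⊆ A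
  le_ncard : ∀ C, B ⊆ C → C ⊆ A → (innerBoundary G U B).ncard ≤ (innerBoundary G U C).ncard

theorem IsBottleneck.mono_right {U B C A : Set V} (h : IsBottleneck G U B A) (hBC : B ⊆ C)
    (hCA : C ⊆ A) : IsBottleneck G U B C :=
  ⟨hBC, fun D hBD hDC => h.le_ncard D hBD (hDC.trans hCA)⟩

theorem IsBottleneck.of_ncard_le {U B C A : Set V} (h : IsBottleneck G U B A) (hBC : B ⊆ C)
    (hCA : C ⊆ A) (hC : (innerBoundary G U C).ncard ≤ (innerBoundary G U B).ncard) :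
    IsBottleneck G U C A :=
  ⟨hCA, fun D hCD hDA => hC.trans (h.le_ncard D (hBC.trans hCD) hDA)⟩

theorem IsBottleneck.sdiff_singleton {U B A : Set V} (h : IsBottleneck G U B A) {x : V}
    (hx : x ∈ innerBoundary G U B) : IsBottleneck G (U \ {x}) (B \ {x}) (A \ {x}) := by
  refine ⟨sdiff_subset_sdiff_left h.subset, fun C hBC hCA => ?_⟩
  have hxC : x ∉ C := fun hxC => (hCA hxC).2 rfl
  have hBC' : B ⊆ insert x C := sdiff_singleton_subset_iff.1 hBC
  have hCA' : insert x C ⊆ A := insert_subset (h.subset hx.1) (hCA.trans sdiff_subset)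
  rw [← insert_sdiff_self_of_notMem hxC,
    innerBoundary_sdiff_of_subset (singleton_subset_iff.2 hx.1),
    innerBoundary_sdiff_of_subset (singleton_subset_iff.2 (mem_insert x C)),
    ncard_sdiff_singleton_of_mem hx]
  exact (Nat.sub_le_sub_right (h.le_ncard _ hBC' hCA') 1).trans
    (pred_ncard_le_ncard_sdiff_singleton _ x)

/-- Deleting `x` and continuing from a vertex `y` outside `B` is the first step of the path of
`x` in Menger's theorem. -/
theorem IsBottleneck.slide [Finite V] {U B A : Set V} (h : IsBottleneck G U B A)
    (hstrict : ∀ C, B ⊂ C → C ⊂ A → (innerBoundary G U B).ncard < (innerBoundary G U C).ncard)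
    {x y : V} (hxB : x ∈ innerBoundary G U B) (hxA : x ∉ innerBoundary G U A) (hyA : y ∈ A)
    (hyB : y ∉ B) :
    innerBoundary G (U \ {x}) (insert y B \ {x}) = insert y (innerBoundary G U B \ {x}) ∧
      IsBottleneck G (U \ {x}) (insert y B \ {x}) (A \ {x}) := by
  have hyx : y ≠ x := (ne_of_mem_of_not_mem hxB.1 hyB).symm
  have hsdiff : ∀ C, x ∈ C → innerBoundary G (U \ {x}) (C \ {x}) = innerBoundary G U C \ {x} :=
    fun C hxC => innerBoundary_sdiff_of_subset (singleton_subset_iff.2 hxC)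
  have hle : ∀ C, insert y B ⊆ C → C ⊆ A →
      (innerBoundary G U B).ncard ≤ (innerBoundary G U C \ {x}).ncard := by
    intro C hBC hCA
    obtain rfl | hne := eq_or_ne C A
    · rw [sdiff_singleton_eq_self hxA]
      exact h.le_ncard C h.subset Subset.rfl
    · have hBC' : B ⊂ C := (ssubset_insert hyB).trans_subset hBC
      exact (Nat.le_sub_one_of_lt (hstrict C hBC' (hCA.ssubset_of_ne hne))).trans
        (pred_ncard_le_ncard_sdiff_singleton _ x)
  have hcard : (insert y (innerBoundary G U B \ {x})).ncard ≤ (innerBoundary G U B).ncard := by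
    rw [← ncard_sdiff_singleton_add_one hxB]
    exact ncard_insert_le ..
  have heq : innerBoundary G (U \ {x}) (insert y B \ {x}) =
      insert y (innerBoundary G U B \ {x}) := by
    rw [hsdiff _ (.inr hxB.1)]
    refine eq_of_subset_of_ncard_le ?_
      (hcard.trans (hle _ Subset.rfl (insert_subset hyA h.subset)))
    rw [insert_sdiff_singleton_comm hyx]
    exact sdiff_subset_sdiff_left (innerBoundary_insert_subset G U B y)
  refine ⟨heq, sdiff_subset_sdiff_left (insert_subset hyA h.subset), fun C hBC hCA => ?_⟩
  have hxC : x ∉ C := fun hxC => (hCA hxC).2 rfl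
  rw [heq, ← insert_sdiff_self_of_notMem hxC, hsdiff _ (mem_insert x C)]
  exact hcard.trans (hle _ (sdiff_singleton_subset_iff.1 hBC)
    (insert_subset (h.subset hxB.1) (hCA.trans sdiff_subset)))

theorem IsLinkage.exists_of_innerBoundary_sdiff_singleton {U B A : Set V} {P : V → Set V} {x : V}
    (h : IsLinkage G (B \ {x}) (innerBoundary G (U \ {x}) (B \ {x})) (A \ {x})
      (innerBoundary G (U \ {x}) (A \ {x})) P)
    (hxB : x ∈ innerBoundary G U B) (hxA : x ∈ innerBoundary G U A) :
    ∃ Q, IsLinkage G B (innerBoundary G U B) A (innerBoundary G U A) Q := by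
  classical
  rw [innerBoundary_sdiff_of_subset (singleton_subset_iff.2 hxB.1),
    innerBoundary_sdiff_of_subset (singleton_subset_iff.2 hxA.1)] at h
  have hinsert := h.insert_singleton (fun hx => hx.2 rfl) hxB.1 hxA.1
  rw [insert_sdiff_self_of_mem hxB, insert_sdiff_self_of_mem hxA] at hinsert
  exact ⟨_, hinsert⟩

/-- A form of Menger's theorem. -/
theorem IsBottleneck.exists_isLinkage [Finite V] {U B A : Set V} (h : IsBottleneck G U B A) :
    ∃ P, IsLinkage G B (innerBoundary G U B) A (innerBoundary G U A) P := by
  classical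
  induction hN : (A \ B).ncard + A.ncard using Nat.strong_induction_on generalizing U B A with
  | _ N ih =>
    subst hN
    by_cases hmid : ∃ C, B ⊂ C ∧ C ⊂ A ∧
        (innerBoundary G U C).ncard ≤ (innerBoundary G U B).ncard
    · obtain ⟨C, hBC, hCA, hC⟩ := hmid
      have hCAlt := ncard_lt_ncard hCA
      have hBClt := ncard_lt_ncard hBC
      have hAB := ncard_sdiff_add_ncard_of_subset h.subset
      have hAC := ncard_sdiff_add_ncard_of_subset hCA.subset
      have hleCA : (C \ B).ncard ≤ (A \ B).ncard :=
        ncard_le_ncard (sdiff_subset_sdiff_left hCA.subset)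
      obtain ⟨P, hP⟩ := ih _ (by lia) (h.mono_right hBC.subset hCA.subset) rfl
      obtain ⟨Q, hQ⟩ := ih _ (by lia) (h.of_ncard_le hBC.subset hCA.subset hC) rfl
      exact hP.exists_trans hBC.subset hCA.subset hQ
    · obtain hB | ⟨x, hx⟩ := (innerBoundary G U B).eq_empty_or_nonempty
      · rw [hB]
        exact ⟨fun _ => ∅, by constructor <;> simp⟩
      have hxA : x ∈ A := h.subset hx.1
      have hlt : (A \ {x}).ncard < A.ncard := ncard_sdiff_singleton_lt_of_mem hxA
      by_cases hxbd : x ∈ innerBoundary G U A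
      · have hcard : ((A \ {x}) \ (B \ {x})).ncard ≤ (A \ B).ncard := ncard_le_ncard (by grind)
        obtain ⟨P, hP⟩ := ih _ (by lia) (h.sdiff_singleton hx) rfl
        exact hP.exists_of_innerBoundary_sdiff_singleton hx hxbd
      · obtain ⟨y, ⟨hyU, hyB⟩, hxy⟩ := hx.2
        have hyA : y ∈ A := by
          by_contra hyA
          exact hxbd ⟨hxA, y, ⟨hyU, hyA⟩, hxy⟩
        have hcard : ((A \ {x}) \ (insert y B \ {x})).ncard ≤ (A \ B).ncard :=
          ncard_le_ncard (by grind)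
        obtain ⟨heq, hslide⟩ := h.slide (by grind) hx hxbd hyA hyB
        obtain ⟨P, hP⟩ := ih _ (by lia) hslide rfl
        rw [heq, innerBoundary_sdiff_of_subset (singleton_subset_iff.2 hxA),
          sdiff_singleton_eq_self hxbd] at hP
        rw [← insert_sdiff_self_of_mem hx]
        exact ⟨_, hP.cons hxy (fun h => h.2 rfl)
          (sdiff_subset.trans (innerBoundary_subset ..)) hx.1 hyB hxA⟩

theorem HasRootedMinorOn.trans_linkage {B X A Y : Set V} {D : Set W} {P : V → Set V}
    (h : HasRootedMinorOn G B F D X) (hP : IsLinkage G B X A Y P) (hBA : B ⊆ A) :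
    HasRootedMinorOn G A F D Y := by
  obtain ⟨f, hf, hroot⟩ := h
  obtain rfl | ⟨w₀, hw₀⟩ := D.eq_empty_or_nonempty
  · exact ⟨f, by constructor <;> simp, by simp⟩
  have : Nonempty V := (hroot w₀ hw₀).nonempty
  choose! r hr using hroot
  have hself : ∀ w ∈ D, r w ∈ P (r w) := fun w hw => hP.self_mem (hr w hw).2
  have hPf : ∀ w ∈ D, ∀ z ∈ P (r w), z ∈ B → z ∈ f w := fun w hw z hz hzB =>
    hP.eq_of_mem (hr w hw).2 hz hzB ▸ (hr w hw).1
  refine ⟨fun w => f w ∪ P (r w), ⟨fun w hw => ?_, fun w hw => ?_, fun u hu w hw huw => ?_,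
    fun u hu w hw huw => ?_⟩, fun w hw => ?_⟩
  · exact union_subset ((hf.subset w hw).trans hBA) (hP.subset _ (hr w hw).2)
  · exact induce_union_connected (hf.connected w hw).preconnected
      (hP.connected _ (hr w hw).2).preconnected ⟨r w, (hr w hw).1, hself w hw⟩
  · have hff := disjoint_left.1 (hf.disjoint hu hw huw)
    refine disjoint_left.2 ?_
    rintro z (hz | hz) (hz' | hz')
    · exact hff hz hz'
    · exact hff hz (hPf w hw z hz' (hf.subset u hu hz))
    · exact hff (hPf u hu z hz (hf.subset w hw hz')) hz'
    · have hne : r u ≠ r w := fun heq => hff (hr u hu).1 (heq ▸ (hr w hw).1)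
      exact disjoint_left.1 (hP.disjoint (hr u hu).2 (hr w hw).2 hne) hz hz'
  · obtain ⟨a, ha, b, hb, hab⟩ := hf.adj u hu w hw huw
    exact ⟨a, .inl ha, b, .inl hb, hab⟩
  · obtain ⟨y, hy, hyY⟩ := hP.meets _ (hr w hw).2
    exact ⟨y, .inr hy, hyY⟩

/-! ### Sweeps -/

/-- The set `A` can be built up from `∅` by adding vertices of `U` one at a time while keeping
the inner boundary of size at most `n`. Thus `Sweepable G U n U` says that the vertex separation
number, equivalently the pathwidth, of the subgraph of `G` induced by `U` is at most `n`. -/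
inductive Sweepable (G : SimpleGraph V) (U : Set V) (n : ℕ) : Set V → Prop
  | protected empty : Sweepable G U n ∅
  | protected insert {A : Set V} {v : V} : Sweepable G U n A → v ∈ U →
      (innerBoundary G U (insert v A)).ncard ≤ n → Sweepable G U n (insert v A)

namespace Sweepable

variable {U A : Set V} {n : ℕ}

theorem subset (h : Sweepable G U n A) : A ⊆ U := by
  induction h with
  | empty => exact empty_subset U
  | insert _ hv _ ih => exact insert_subset hv ih

theorem ncard_innerBoundary_le (h : Sweepable G U n A) : (innerBoundary G U A).ncard ≤ n := by
  cases h with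
  | empty => simp [innerBoundary_empty]
  | insert _ _ hn => exact hn

theorem inter [Finite V] (hA : Sweepable G U n A) {C : Set V}
    (hC : IsBottleneck G U C (C ∪ A)) : Sweepable G U n (A ∩ C) := by
  induction hA with
  | empty =>
    rw [empty_inter]
    exact .empty
  | @insert A v _ hv hn ih =>
    have hC' : IsBottleneck G U C (C ∪ A) :=
      hC.mono_right subset_union_left (union_subset_union_right C (subset_insert v A))
    by_cases hvC : v ∈ C
    · have hsub := ncard_innerBoundary_inter_add_ncard_union_le G U (insert v A) C
      have hle := hC.le_ncard (insert v A ∪ C) subset_union_right (union_comm _ _).subset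
      rw [insert_inter_of_mem hvC] at hsub ⊢
      exact (ih hC').insert hv (by lia)
    · rw [insert_inter_of_notMem hvC]
      exact ih hC'

theorem isBottleneck [Finite V] (hA : Sweepable G U n A) {B : Set V} (hBA : B ⊆ A)
    (h : ∀ C, B ⊆ C → C ⊆ A → Sweepable G U n C →
      (innerBoundary G U B).ncard ≤ (innerBoundary G U C).ncard) : IsBottleneck G U B A := by
  obtain ⟨C, ⟨hBC, hCA⟩, hmin⟩ := exists_min_image (Icc B A)
    (fun C => (innerBoundary G U C).ncard) (toFinite _) ⟨B, Subset.rfl, hBA⟩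
  have hC : IsBottleneck G U C (C ∪ A) := by
    rw [union_eq_self_of_subset_left hCA]
    exact ⟨hCA, fun D hCD hDA => hmin D ⟨hBC.trans hCD, hDA⟩⟩
  have hsweep := hA.inter hC
  rw [inter_eq_self_of_subset_right hCA] at hsweep
  exact ⟨hBA, fun D hBD hDA => (h C hBC hCA hsweep).trans (hmin D ⟨hBD, hDA⟩)⟩

theorem sdiff [Finite V] (hA : Sweepable G U n A) (Y : Set V) :
    Sweepable G (U \ Y) n (A \ Y) := by
  induction hA with
  | empty =>
    rw [empty_sdiff]
    exact .empty
  | @insert A v _ hv hn ih =>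
    by_cases hvY : v ∈ Y
    · rwa [insert_sdiff_of_mem A hvY]
    · have hn' := (ncard_le_ncard (innerBoundary_sdiff_subset G U (insert v A) Y)).trans hn
      rw [insert_sdiff_of_notMem A hvY] at hn' ⊢
      exact ih.insert ⟨hv, hvY⟩ hn'

theorem union [Finite V] {C D : Set V} (hA : Sweepable G (A ∪ D) n A) (hAD : Anticomplete G A D)
    (hC : Sweepable G D n C) : Sweepable G (A ∪ D) n (A ∪ C) := by
  induction hC with
  | empty => rwa [union_empty]
  | @insert C v _ hv hn ih =>
    rw [union_insert]
    refine ih.insert (.inr hv) ((ncard_le_ncard ?_).trans hn)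
    rw [← union_insert]
    rintro x ⟨hx, b, ⟨hb, hbC⟩, hxb⟩
    have hbD : b ∈ D := hb.resolve_left fun h => hbC (.inl h)
    exact ⟨hx.resolve_left fun h => hAD x h b hbD hxb, b, ⟨hbD, fun h => hbC (.inr h)⟩, hxb⟩

theorem exists_first {p : Set V → Prop} (hA : Sweepable G U n A) (hempty : ¬p ∅) (hp : p A) :
    ∃ B v, Sweepable G U n B ∧ ¬p B ∧ Sweepable G U n (insert v B) ∧ p (insert v B) := by
  induction hA with
  | empty => exact (hempty hp).elim
  | @insert A v hA hv hn ih =>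
    by_cases hpA : p A
    · exact ih hpA
    · exact ⟨A, v, hA, hpA, hA.insert hv hn, hp⟩

end Sweepable

/-- A sweepable set of inner boundary at most `m` that no sweepable superset improves on. -/
def IsMaximalSweep (G : SimpleGraph V) (U : Set V) (n m : ℕ) (A : Set V) : Prop :=
  Maximal (fun A => Sweepable G U n A ∧ (innerBoundary G U A).ncard ≤ m) A

theorem Sweepable.exists_isMaximalSweep [Finite V] {U A : Set V} {n m : ℕ}
    (hA : Sweepable G U n A) (hm : (innerBoundary G U A).ncard ≤ m) :
    ∃ B, A ⊆ B ∧ IsMaximalSweep G U n m B :=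
  Finite.exists_le_maximal (p := fun A => Sweepable G U n A ∧ (innerBoundary G U A).ncard ≤ m)
    ⟨hA, hm⟩

theorem IsMaximalSweep.lt_ncard {U A C : Set V} {n m : ℕ} (hA : IsMaximalSweep G U n m A)
    (hC : Sweepable G U n C) (hAC : A ⊂ C) : m < (innerBoundary G U C).ncard := by
  by_contra! hle
  exact hAC.2 (hA.2 ⟨hC, hle⟩ hAC.1)

theorem exists_neighborSet_subsingleton_of_isAcyclic [Finite W] [Nonempty W] (hF : F.IsAcyclic) :
    ∃ w, (F.neighborSet w).Subsingleton := by
  classical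
  have := Fintype.ofFinite W
  obtain ⟨T, hFT, -, hT⟩ :=
    (connected_top (V := W)).exists_isTree_le_of_le_of_isAcyclic le_top hF
  obtain hW | hW := subsingleton_or_nontrivial W
  · exact ⟨Classical.arbitrary W, subsingleton_of_subsingleton⟩
  · obtain ⟨w, hw⟩ := hT.exists_vert_degree_one_of_nontrivial
    rw [degree_eq_one_iff_existsUnique_adj] at hw
    exact ⟨w, fun u hu v hv => hw.unique (hFT hu) (hFT hv)⟩

theorem HasRootedMinorOn.exists_insert_leaf {U A : Set V} {D : Set W} {w : W}
    (h : HasRootedMinorOn G A F D (innerBoundary G U A)) (hUA : (U \ A).Nonempty) (hwD : w ∉ D)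
    (hw : (D ∩ F.neighborSet w).Subsingleton) :
    ∃ y ∈ U \ A,
      HasRootedMinorOn G (insert y A) F (insert w D) (insert y (innerBoundary G U A)) := by
  classical
  obtain ⟨f, hf, hroot⟩ := h
  obtain ⟨y, hy, hadj⟩ : ∃ y ∈ U \ A, ∀ u ∈ D, F.Adj w u → ∃ a ∈ f u, G.Adj y a := by
    obtain hempty | ⟨u, hu, hwu⟩ := (D ∩ F.neighborSet w).eq_empty_or_nonempty
    · obtain ⟨y, hy⟩ := hUA
      exact ⟨y, hy, fun u hu hwu => (hempty.subset ⟨hu, hwu⟩).elim⟩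
    · obtain ⟨a, hau, -, y, hy, hay⟩ := hroot u hu
      exact ⟨y, hy, fun v hv hwv => hw ⟨hu, hwu⟩ ⟨hv, hwv⟩ ▸ ⟨a, hau, hay.symm⟩⟩
  refine ⟨y, hy, _, hf.insert hwD hy.2 hadj, forall_mem_insert.2 ⟨?_, fun u hu => ?_⟩⟩
  · rw [Function.update_self]
    exact ⟨y, rfl, .inl rfl⟩
  · rw [Function.update_of_ne (ne_of_mem_of_not_mem hu hwD)]
    exact (hroot u hu).mono (inter_subset_inter_right _ (subset_insert ..))

theorem IsMaximalSweep.exists_insert_leaf [Finite V] {U A : Set V} {n m : ℕ} {D : Set W} {w : W}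
    (hA : IsMaximalSweep G U n m A) (hmn : m < n) (hUA : (U \ A).Nonempty)
    (h : HasRootedMinorOn G A F D (innerBoundary G U A)) (hwD : w ∉ D)
    (hw : (D ∩ F.neighborSet w).Subsingleton) :
    ∃ B, IsMaximalSweep G U n (m + 1) B ∧
      HasRootedMinorOn G B F (insert w D) (innerBoundary G U B) := by
  obtain ⟨y, ⟨hyU, hyA⟩, hrooted⟩ := h.exists_insert_leaf hUA hwD hw
  have hcard : (innerBoundary G U (insert y A)).ncard ≤ m + 1 :=
    (ncard_innerBoundary_insert_le G U A y).trans (Nat.add_le_add_right hA.1.2 1)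
  have hsweep : Sweepable G U n (insert y A) := hA.1.1.insert hyU (hcard.trans hmn)
  rw [← innerBoundary_insert_eq_of_ncard_lt
    (hA.1.2.trans_lt (hA.lt_ncard hsweep (ssubset_insert hyA)))] at hrooted
  obtain ⟨B, hAB, hB⟩ := hsweep.exists_isMaximalSweep hcard
  have hbottle : IsBottleneck G U (insert y A) B := hB.1.1.isBottleneck hAB fun C hAC _ hC =>
    hcard.trans (hA.lt_ncard hC ((ssubset_insert hyA).trans_subset hAC))
  obtain ⟨P, hP⟩ := hbottle.exists_isLinkage
  exact ⟨B, hB, hrooted.trans_linkage hP hAB⟩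

/-- Diestel's short proof that large pathwidth forces a forest minor: remove a leaf `w` of `F`
within `D`, find the rest by induction, attach `w` just outside the maximal sweep found, and
carry the roots along to the boundary of a larger maximal sweep. -/
theorem exists_isMaximalSweep_hasRootedMinorOn [Finite V] {U : Set V} {n : ℕ} (hF : F.IsAcyclic)
    (hU : ¬Sweepable G U n U) (D : Finset W) (hD : D.card ≤ n) :
    ∃ A, IsMaximalSweep G U n D.card A ∧ HasRootedMinorOn G A F D (innerBoundary G U A) := by
  classical
  induction hk : D.card generalizing D with
  | zero =>
    obtain ⟨A, -, hA⟩ := (Sweepable.empty (G := G) (U := U) (n := n)).exists_isMaximalSweep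
      (m := 0) (by simp [innerBoundary_empty])
    rw [Finset.card_eq_zero.1 hk, Finset.coe_empty]
    exact ⟨A, hA, fun _ => ∅, by constructor <;> simp, by simp⟩
  | succ m ih =>
    have : Nonempty D := (Finset.card_pos.1 (by lia)).to_subtype
    obtain ⟨⟨w, hwD⟩, hw⟩ :=
      exists_neighborSet_subsingleton_of_isAcyclic (hF.induce (D : Set W))
    obtain ⟨A, hA, hrooted⟩ := ih (D.erase w) (by grind) (by grind)
    have hUA : (U \ A).Nonempty := sdiff_nonempty.2 fun hUA => hU <|
      hUA.antisymm hA.1.1.subset ▸ hA.1.1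
    have hleaf : (↑(D.erase w) ∩ F.neighborSet w).Subsingleton := by
      rintro u ⟨hu, hwu⟩ v ⟨hv, hwv⟩
      exact congrArg Subtype.val (hw (x := ⟨u, Finset.mem_of_mem_erase hu⟩) hwu
        (y := ⟨v, Finset.mem_of_mem_erase hv⟩) hwv)
    have := hA.exists_insert_leaf (by lia) hUA hrooted (by simp) hleaf
    rwa [← Finset.coe_insert, Finset.insert_erase hwD] at this

theorem exists_sweepable_hasMinorOn [Finite V] [Fintype W] {U : Set V} (hF : F.IsAcyclic)
    (hU : ¬Sweepable G U (Fintype.card W) U) :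
    ∃ A, Sweepable G U (Fintype.card W) A ∧ HasMinorOn G A F univ := by
  obtain ⟨A, hA, h⟩ := exists_isMaximalSweep_hasRootedMinorOn hF hU Finset.univ le_rfl
  exact ⟨A, hA.1.1, Finset.coe_univ (α := W) ▸ h.hasMinorOn⟩

/-! ### Packing or hitting along a sweep -/

/-- A greedy packing: as long as the current induced subgraph is not sweepable, split off a
member together with its small boundary. -/
theorem exists_pairwiseDisjoint_sweepable_sdiff [Finite V] {n : ℕ} {p : Set V → Prop}
    (hempty : ¬p ∅) (hp : ∀ U, ¬Sweepable G U n U → ∃ A, Sweepable G U n A ∧ p A) (U : Set V) :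
    ∃ (𝓢 : Finset (Set V)) (X : Set V), (∀ S ∈ 𝓢, S ⊆ U ∧ p S) ∧
      (𝓢 : Set (Set V)).PairwiseDisjoint id ∧ X ⊆ U ∧ X.ncard ≤ n * 𝓢.card ∧
      Sweepable G (U \ X) n (U \ X) := by
  classical
  induction hN : U.ncard using Nat.strong_induction_on generalizing U with
  | _ N ih =>
    subst hN
    by_cases hU : Sweepable G U n U
    · exact ⟨∅, ∅, by simp, by simp, empty_subset U, by simp, by simpa using hU⟩
    obtain ⟨A, hA, hpA⟩ := hp U hU
    obtain ⟨a, ha⟩ : A.Nonempty := nonempty_iff_ne_empty.2 fun h => hempty (h ▸ hpA)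
    obtain ⟨𝓢, X, h𝓢, hdisj, hXU, hX, hsweep⟩ :=
      ih _ (ncard_lt_ncard (sdiff_ssubset_left_iff.2 ⟨a, hA.subset ha, ha⟩)) (U \ A) rfl
    have hdisjA : ∀ S ∈ 𝓢, Disjoint A S := fun S hS =>
      disjoint_sdiff_right.mono_right (h𝓢 S hS).1
    have hA𝓢 : A ∉ 𝓢 := fun h => disjoint_left.1 (hdisjA A h) ha ha
    set Y := innerBoundary G U A
    have hYA : Y ⊆ A := innerBoundary_subset G U A
    refine ⟨insert A 𝓢, Y ∪ X, ?_, ?_, ?_, ?_, ?_⟩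
    · exact (Finset.forall_mem_insert ..).2
        ⟨⟨hA.subset, hpA⟩, fun S hS => ⟨(h𝓢 S hS).1.trans sdiff_subset, (h𝓢 S hS).2⟩⟩
    · rw [Finset.coe_insert]
      exact hdisj.insert fun S hS _ => hdisjA S hS
    · exact union_subset (hYA.trans hA.subset) (hXU.trans sdiff_subset)
    · rw [Finset.card_insert_of_notMem hA𝓢, Nat.mul_succ, Nat.add_comm]
      exact (ncard_union_le Y X).trans (Nat.add_le_add hA.ncard_innerBoundary_le hX)
    · have hAX : A \ (Y ∪ X) = A \ Y := by grind
      have hUX : U \ (Y ∪ X) = A \ Y ∪ (U \ A) \ X := by grind [hA.subset]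
      have hAsweep := hA.sdiff (Y ∪ X)
      rw [hAX, hUX] at hAsweep
      rw [hUX]
      exact hAsweep.union
        ((anticomplete_sdiff_innerBoundary G U A).mono Subset.rfl sdiff_subset) hsweep

/-- A property of vertex sets that behaves like containing a connected graph as a minor: it is
monotone and nontrivial, and if it holds for a union of two anticomplete sets, then it holds
for one of the two. -/
structure IsConnectedProperty (G : SimpleGraph V) (p : Set V → Prop) : Prop where
  mono : ∀ ⦃A B⦄, A ⊆ B → p A → p B
  not_empty : ¬p ∅
  or_of_anticomplete : ∀ ⦃A B⦄, Anticomplete G A B → p (A ∪ B) → p A ∨ p B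

theorem isConnectedProperty_hasMinorOn {D : Set W} (hD : (F.induce D).Connected) :
    IsConnectedProperty G (HasMinorOn G · F D) where
  mono _ _ hAB h := h.mono hAB Subset.rfl
  not_empty := not_hasMinorOn_empty (nonempty_coe_sort.1 hD.nonempty)
  or_of_anticomplete _ _ hAB h := h.or_of_anticomplete hD hAB

theorem IsConnectedProperty.not_sdiff {p : Set V → Prop} (hp : IsConnectedProperty G p)
    {U B X : Set V} {v : V} (hB : ¬p B) (hX : ¬p ((U \ insert v B) \ X)) :
    ¬p (U \ (insert v (innerBoundary G U B) ∪ X)) := by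
  intro h
  have hsub : U \ (insert v (innerBoundary G U B) ∪ X) ⊆
      (B \ innerBoundary G U B) ∪ ((U \ insert v B) \ X) := by grind
  have hanti : Anticomplete G (B \ innerBoundary G U B) ((U \ insert v B) \ X) :=
    (anticomplete_sdiff_innerBoundary G U B).mono Subset.rfl (by grind)
  obtain h | h := hp.or_of_anticomplete hanti (hp.mono hsub h)
  · exact hB (hp.mono sdiff_subset h)
  · exact hX h

/-- The first prefix of the sweep that has some of the properties is packed; one step earlier it
had none of them, so that its boundary separates what is still to be packed or hit. -/
theorem Sweepable.exists_pairwiseDisjoint_or_exists_not [Finite V] {ι : Type*} {n : ℕ} {U : Set V}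
    {p : ι → Set V → Prop} (hU : Sweepable G U n U) (hp : ∀ i, IsConnectedProperty G (p i))
    (J : Finset ι) :
    (∃ S : ι → Set V, (J : Set ι).PairwiseDisjoint S ∧ ∀ i ∈ J, S i ⊆ U ∧ p i (S i)) ∨
      ∃ i ∈ J, ∃ X : Set V, X.ncard ≤ (n + 1) * J.card ∧ ¬p i (U \ X) := by
  classical
  induction hk : J.card generalizing J U with
  | zero =>
    rw [Finset.card_eq_zero.1 hk]
    exact .inl ⟨fun _ => ∅, by simp⟩
  | succ k ih =>
    by_cases hJU : ∃ i ∈ J, p i U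
    swap
    · obtain ⟨i, hi⟩ := Finset.card_pos.1 (hk ▸ Nat.succ_pos k : 0 < J.card)
      exact .inr ⟨i, hi, ∅, by simp, fun h => hJU ⟨i, hi, by simpa using h⟩⟩
    obtain ⟨B, v, hB, hpB, hA, i, hi, hpA⟩ :=
      hU.exists_first (p := fun A => ∃ i ∈ J, p i A) (fun ⟨i, _, h⟩ => (hp i).not_empty h) hJU
    obtain ⟨S, hdisj, hS⟩ | ⟨j, hj, X, hX, hpX⟩ := ih (hU.sdiff (insert v B)) (J.erase i)
      (by rw [Finset.card_erase_of_mem hi, hk, Nat.add_sub_cancel])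
    · have hmem : insert i (J.erase i) = J := Finset.insert_erase hi
      rw [← hmem, Finset.coe_insert]
      refine .inl ⟨Function.update S i (insert v B),
        pairwiseDisjoint_insert_update hdisj (by simp) fun j hj =>
          disjoint_sdiff_right.mono_right (hS j hj).1,
        (Finset.forall_mem_insert ..).2 ⟨?_, fun j hj => ?_⟩⟩
      · rw [Function.update_self]
        exact ⟨hA.subset, hpA⟩
      · rw [Function.update_of_ne (Finset.ne_of_mem_erase hj)]
        exact ⟨(hS j hj).1.trans sdiff_subset, (hS j hj).2⟩
    · refine .inr ⟨j, Finset.mem_of_mem_erase hj, insert v (innerBoundary G U B) ∪ X, ?_, ?_⟩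
      · have hcard := ncard_union_le (insert v (innerBoundary G U B)) X
        have hcard' := ncard_insert_le v (innerBoundary G U B)
        have := hB.ncard_innerBoundary_le
        rw [Nat.mul_succ]
        lia
      · exact (hp j).not_sdiff (fun h => hpB ⟨j, Finset.mem_of_mem_erase hj, h⟩) hpX

/-! ### Packing and covering numbers -/

theorem HasMinorOn.ncard_le [Finite V] {S : Set V} {D : Set W} (h : HasMinorOn G S F D) :
    D.ncard ≤ S.ncard := by
  obtain ⟨f, hf⟩ := h
  have hne : ∀ w : D, ∃ x, x ∈ f w := fun w =>
    nonempty_coe_sort.1 (hf.connected w w.2).nonempty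
  choose g hg using hne
  have hinj : Function.Injective fun w : D => (⟨g w, hf.subset w w.2 (hg w)⟩ : S) := by
    intro u w huw
    by_contra hne
    have hgeq : g u = g w := congrArg Subtype.val huw
    exact Set.disjoint_left.1 (hf.disjoint u.2 w.2 (Subtype.coe_ne_coe.2 hne)) (hg u)
      (hgeq ▸ hg w)
  simpa only [Nat.card_coe_set_eq] using Nat.card_le_card_of_injective _ hinj

theorem IsHPacking.mul_card_le [Fintype V] [Fintype W] {k : ℕ} {S : Fin k → Set V}
    (h : IsHPacking G F k S) : k * Fintype.card W ≤ Fintype.card V := by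
  calc
    k * Fintype.card W = ∑ _a : Fin k, (univ : Set W).ncard := by simp
    _ ≤ ∑ a, (S a).ncard :=
      Finset.sum_le_sum fun a _ => (hasMinor_induce_iff.1 (h.2 a)).ncard_le
    _ = (⋃ a, S a).ncard := by
      rw [ncard_iUnion_of_finite (fun a => toFinite (S a)) h.1, finsum_eq_sum_of_fintype]
    _ ≤ Fintype.card V := by simpa using ncard_le_card (⋃ a, S a)

theorem bddAbove_setOf_isHPacking [Finite V] [Finite W] [Nonempty W] (G : SimpleGraph V)
    (F : SimpleGraph W) : BddAbove {k | ∃ S : Fin k → Set V, IsHPacking G F k S} := by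
  have := Fintype.ofFinite V
  have := Fintype.ofFinite W
  refine ⟨Fintype.card V, ?_⟩
  rintro k ⟨S, hS⟩
  exact (Nat.le_mul_of_pos_right k Fintype.card_pos).trans hS.mul_card_le

theorem nuT_mul_card_le [Fintype V] [Fintype W] [Nonempty W] (G : SimpleGraph V)
    (F : SimpleGraph W) : nuT G F * Fintype.card W ≤ Fintype.card V := by
  obtain ⟨S, hS⟩ : nuT G F ∈ {k | ∃ S : Fin k → Set V, IsHPacking G F k S} :=
    Nat.sSup_mem ⟨0, Fin.elim0, by simp [IsHPacking, Pairwise]⟩ (bddAbove_setOf_isHPacking G F)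
  exact hS.mul_card_le

theorem card_le_nuT [Finite V] [Finite W] [Nonempty W] {ι : Type*} [Fintype ι] {S : ι → Set V}
    (hdisj : Pairwise fun i j => Disjoint (S i) (S j)) (hS : ∀ i, HasMinorOn G (S i) F univ) :
    Fintype.card ι ≤ nuT G F := by
  let e := (Fintype.equivFin ι).symm
  exact le_csSup (bddAbove_setOf_isHPacking G F)
    ⟨S ∘ e, fun _ _ hab => hdisj (e.injective.ne hab), fun a => hasMinor_induce_iff.2 (hS (e a))⟩

theorem tauT_le_ncard {X : Set V} (hX : ¬HasMinorOn G Xᶜ F univ) : tauT G F ≤ X.ncard :=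
  Nat.sInf_le ⟨X, rfl, mt hasMinor_induce_iff.1 hX⟩

theorem exists_ncard_eq_tauT [Nonempty W] (G : SimpleGraph V) (F : SimpleGraph W) :
    ∃ X : Set V, X.ncard = tauT G F ∧ ¬HasMinorOn G Xᶜ F univ := by
  obtain ⟨X, hX, hF⟩ : tauT G F ∈
      {n | ∃ X : Set V, X.ncard = n ∧ ¬HasMinor (G.induce Xᶜ) F} := by
    refine Nat.sInf_mem ⟨_, univ, rfl, ?_⟩
    rw [hasMinor_induce_iff, compl_univ]
    exact not_hasMinorOn_empty univ_nonempty
  exact ⟨X, hX, mt hasMinor_induce_iff.2 hF⟩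

/-- Forests have the Erdős–Pósa property with a linear bound. -/
theorem tauT_le_of_isAcyclic [Finite V] [Fintype W] [Nonempty W] (G : SimpleGraph V)
    (hF : F.IsAcyclic) :
    tauT G F ≤ Fintype.card W * nuT G F +
      (Fintype.card W + 1) * (Fintype.card W * (nuT G F + 1)) := by
  classical
  obtain ⟨𝓢, X, h𝓢, hdisj, -, hX, hsweep⟩ := exists_pairwiseDisjoint_sweepable_sdiff (G := G)
    (p := fun A => HasMinorOn G A F univ) (not_hasMinorOn_empty univ_nonempty)
    (fun U => exists_sweepable_hasMinorOn hF) univ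
  have h𝓢ν : 𝓢.card ≤ nuT G F := by
    rw [← Fintype.card_coe]
    exact card_le_nuT (S := ((↑) : 𝓢 → Set V))
      (fun S T hST => hdisj S.2 T.2 (Subtype.coe_ne_coe.2 hST)) fun S => (h𝓢 S S.2).2
  obtain ⟨S, hSdisj, hS⟩ | ⟨⟨c, k⟩, -, Y, hY, hc⟩ :=
    hsweep.exists_pairwiseDisjoint_or_exists_not
      (p := fun (i : F.ConnectedComponent × Fin (nuT G F + 1)) A => HasMinorOn G A F i.1.supp)
      (fun i => isConnectedProperty_hasMinorOn i.1.connected_toSimpleGraph) Finset.univ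
  · rw [Finset.coe_univ, PairwiseDisjoint, pairwise_univ] at hSdisj
    have hν : Fintype.card (Fin (nuT G F + 1)) ≤ nuT G F := by
      refine card_le_nuT (S := fun k => ⋃ c, S (c, k)) (fun k l hkl => ?_) fun k => ?_
      · exact disjoint_iUnion_left.2 fun c => disjoint_iUnion_right.2 fun d =>
          hSdisj fun h => hkl (congrArg Prod.snd h)
      · exact hasMinorOn_iUnion_of_connectedComponent (fun c => (hS (c, k) (Finset.mem_univ _)).2)
          fun c d hcd => hSdisj fun h => hcd (congrArg Prod.fst h)
    simp at hν
  · have hτ : tauT G F ≤ (X ∪ Y).ncard := by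
      refine tauT_le_ncard fun h => hc (h.mono ?_ (subset_univ _))
      grind
    have hcomp : Fintype.card F.ConnectedComponent ≤ Fintype.card W :=
      Fintype.card_le_of_surjective _ Quot.mk_surjective
    rw [Finset.card_univ, Fintype.card_prod, Fintype.card_fin] at hY
    calc
      tauT G F ≤ X.ncard + Y.ncard := hτ.trans (ncard_union_le X Y)
      _ ≤ Fintype.card W * 𝓢.card +
          (Fintype.card W + 1) * (Fintype.card F.ConnectedComponent * (nuT G F + 1)) :=
        Nat.add_le_add hX hY
      _ ≤ _ := by gcongr

theorem tauT_div_nuT_le_of_isAcyclic [Finite V] [Fintype W] [Nonempty W] (hF : F.IsAcyclic)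
    (hν : 0 < nuT G F) :
    (tauT G F : ℝ) / nuT G F ≤
      Fintype.card W + 2 * (Fintype.card W + 1) * Fintype.card W := by
  have hν' : 1 ≤ (nuT G F : ℝ) := mod_cast hν
  have hτ : (tauT G F : ℝ) ≤ Fintype.card W * nuT G F +
      (Fintype.card W + 1) * (Fintype.card W * (nuT G F + 1)) := by
    exact_mod_cast tauT_le_of_isAcyclic G hF
  rw [div_le_iff₀ (by linarith)]
  calc
    (tauT G F : ℝ) ≤ _ := hτ
    _ ≤ Fintype.card W * nuT G F +
        (Fintype.card W + 1) * (Fintype.card W * (nuT G F + nuT G F)) := by gcongr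
    _ = _ := by ring

/-! ### Complete graphs -/

theorem hasMinorOn_top [Finite V] [Fintype W] {S : Set V} (F : SimpleGraph W)
    (hS : Fintype.card W ≤ S.ncard) : HasMinorOn ⊤ S F univ := by
  have := Fintype.ofFinite S
  obtain ⟨g⟩ : Nonempty (W ↪ S) := Function.Embedding.nonempty_of_card_le (by
    rwa [← Nat.card_coe_set_eq, Nat.card_eq_fintype_card] at hS)
  refine ⟨fun w => {(g w : V)}, fun w _ => singleton_subset_iff.2 (g w).2,
    fun w _ => induce_singleton_connected ⊤ (g w : V), fun u _ w _ huw => ?_,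
    fun u _ w _ huw => ⟨_, rfl, _, rfl, ?_⟩⟩
  · exact disjoint_singleton.2 (Subtype.coe_ne_coe.2 (g.injective.ne huw))
  · exact (top_adj ..).2 (Subtype.coe_ne_coe.2 (g.injective.ne huw.ne))

theorem card_lt_tauT_top_add_card [Fintype V] [Fintype W] [Nonempty W] (F : SimpleGraph W) :
    Fintype.card V < tauT (⊤ : SimpleGraph V) F + Fintype.card W := by
  obtain ⟨X, hX, hF⟩ := exists_ncard_eq_tauT (⊤ : SimpleGraph V) F
  have hXc : Xᶜ.ncard < Fintype.card W := lt_of_not_ge fun h => hF (hasMinorOn_top F h)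
  have hcard := ncard_add_ncard_compl X
  rw [Nat.card_eq_fintype_card] at hcard
  lia

theorem nuT_top_pos [Fintype V] [Fintype W] [Nonempty W] (F : SimpleGraph W)
    (hWV : Fintype.card W ≤ Fintype.card V) : 0 < nuT (⊤ : SimpleGraph V) F :=
  card_le_nuT (S := fun _ : Unit => univ) (fun _ _ h => (h rfl).elim) fun _ =>
    hasMinorOn_top F (by simpa using hWV)

theorem sub_sq_div_le_tauT_top_div_nuT_top [Fintype V] [Fintype W] [Nonempty W]
    (F : SimpleGraph W) (hWV : Fintype.card W ≤ Fintype.card V) :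
    (Fintype.card W : ℝ) - (Fintype.card W : ℝ) ^ 2 / Fintype.card V ≤
      (tauT (⊤ : SimpleGraph V) F : ℝ) / nuT (⊤ : SimpleGraph V) F := by
  have hW : 0 < (Fintype.card W : ℝ) := mod_cast Fintype.card_pos
  have hV : (Fintype.card W : ℝ) ≤ Fintype.card V := mod_cast hWV
  have hν : 0 < (nuT (⊤ : SimpleGraph V) F : ℝ) := mod_cast nuT_top_pos F hWV
  have hντ : (Fintype.card V : ℝ) - Fintype.card W ≤ tauT (⊤ : SimpleGraph V) F := by
    rw [sub_le_iff_le_add]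
    exact_mod_cast (card_lt_tauT_top_add_card (V := V) F).le
  have hνV : (nuT (⊤ : SimpleGraph V) F : ℝ) ≤ Fintype.card V / Fintype.card W := by
    rw [le_div_iff₀ hW]
    exact_mod_cast nuT_mul_card_le (⊤ : SimpleGraph V) F
  calc
    (Fintype.card W : ℝ) - (Fintype.card W : ℝ) ^ 2 / Fintype.card V
      = (Fintype.card V - Fintype.card W) / (Fintype.card V / Fintype.card W) := by
        have := hW.trans_le hV
        field_simp
    _ ≤ _ := div_le_div₀ (Nat.cast_nonneg _) hντ hν hνV

end

/-- For every (nonempty) forest `F`, the supremum `ρ(F)` of `τ_F(G)/ν_F(G)` over all graphs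
`G` with `ν_F(G) > 0` is at least `|V(F)|`. -/
theorem rho_ge_card {W : Type} [Fintype W] [Nonempty W] (F : SimpleGraph W)
    (hF : F.IsAcyclic) :
    (Fintype.card W : ℝ) ≤
      sSup {ρ : ℝ | ∃ (V : Type) (_ : Fintype V) (G : SimpleGraph V),
        0 < nuT G F ∧ ρ = (tauT G F : ℝ) / (nuT G F : ℝ)} := by
  have hbdd : BddAbove {ρ : ℝ | ∃ (V : Type) (_ : Fintype V) (G : SimpleGraph V),
      0 < nuT G F ∧ ρ = (tauT G F : ℝ) / (nuT G F : ℝ)} := by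
    refine ⟨Fintype.card W + 2 * (Fintype.card W + 1) * Fintype.card W, ?_⟩
    rintro _ ⟨V, _, G, hν, rfl⟩
    exact tauT_div_nuT_le_of_isAcyclic hF hν
  have hlim : Filter.Tendsto
      (fun n : ℕ => (Fintype.card W : ℝ) - (Fintype.card W : ℝ) ^ 2 / n) Filter.atTop
      (nhds (Fintype.card W)) := by
    simpa using (tendsto_const_div_atTop_nhds_zero_nat ((Fintype.card W : ℝ) ^ 2)).const_sub
      (Fintype.card W : ℝ)
  refine le_of_tendsto hlim ?_
  filter_upwards [Filter.eventually_ge_atTop (Fintype.card W)] with n hn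
  have hW : Fintype.card W ≤ Fintype.card (Fin n) := by rwa [Fintype.card_fin]
  have hratio := sub_sq_div_le_tauT_top_div_nuT_top F hW
  rw [Fintype.card_fin] at hratio
  exact hratio.trans (le_csSup hbdd ⟨Fin n, inferInstance, ⊤, nuT_top_pos F hW, rfl⟩)
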